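/- (Theorem 1) Fix a natural number t0 ≥ 1 and a real α with 1/(2(t0+1)) < α < 1/2. Let Y follow the ideal violation dynamics started from any Y(t0) ∈ [0,1], and set Z*(t) := |α − Y(t)|. Then Z* is monotonically decreasing from t0 onward, i.e., Z*(t+1) ≤ Z*(t) for all t ≥ t0, if and only if Y(t) ∉ κ(α, t) for all t ≥ t0. -/

import Mathlib

/-- `β(t, α, Y) := |α − tY/(t+1) − 1/(t+1)| − |α − tY/(t+1)|`. -/
noncomputable def beta (t : ℕ) (α Y : ℝ) : ℝ :=
  |α - (t : ℝ) * Y / ((t : ℝ) + 1) - 1 / ((t : ℝ) + 1)| - |α - (t : ℝ) * Y / ((t : ℝ) + 1)|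

/-- The critical region `κ(α, t) := ( ((t+1)α − 1/2)/(t + 1/2), (t+1)α/(t + 1/2) )`. -/
def kappa (α : ℝ) (t : ℕ) : Set ℝ :=
  Set.Ioo ((((t : ℝ) + 1) * α - 1 / 2) / ((t : ℝ) + 1 / 2)) (((t : ℝ) + 1) * α / ((t : ℝ) + 1 / 2))

/-!
The claim holds step by step. A step replaces `y` by a weighted mean `y'` of `y` and a target, `1`
if there is a violation and `0` otherwise; the bounds on `α` ensure that `y` lies strictly below
the target `1` or strictly above the target `0`, respectively. Hence the direction of the move is
known, and the distance to `α` increases exactly when `α` lies on the side of the midpoint of `y`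
and `y'` that is being left. Solving this for `y`, the violation case yields the lower endpoint of
the critical region and the other case its upper endpoint; in each case the remaining endpoint
condition is automatic.
-/

section LinearOrderedField

variable {K : Type*} [Field K] [LinearOrder K] [IsStrictOrderedRing K] {a b c : K}

theorem abs_sub_one_lt_abs_iff : |a - 1| < |a| ↔ 1 / 2 < a := by
  rw [← sq_lt_sq]
  constructor <;> intro h <;> linarith

theorem abs_sub_right_le_abs_sub_left_iff (hbc : b < c) :
    |a - c| ≤ |a - b| ↔ b + c ≤ 2 * a := by
  have factor : (a - b) ^ 2 - (a - c) ^ 2 = (c - b) * (2 * a - (b + c)) := by ring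
  rw [← sq_le_sq, ← sub_nonneg, factor, mul_nonneg_iff_of_pos_left (sub_pos.2 hbc), sub_nonneg]

theorem abs_sub_left_le_abs_sub_right_iff (hbc : b < c) :
    |a - b| ≤ |a - c| ↔ 2 * a ≤ b + c := by
  have factor : (a - c) ^ 2 - (a - b) ^ 2 = (c - b) * (b + c - 2 * a) := by ring
  rw [← sq_le_sq, ← sub_nonneg, factor, mul_nonneg_iff_of_pos_left (sub_pos.2 hbc), sub_nonneg]

end LinearOrderedField

/-- One step `Y(t) ↦ Y(t+1)` of the ideal violation dynamics: the running mean `y` of the first `t`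
violation indicators is updated with the indicator `V*(t+1)` of `β(t, α, y) < 0`. -/
noncomputable def idealUpdate (t : ℕ) (α y : ℝ) : ℝ :=
  ((t : ℝ) * y + (if beta t α y < 0 then 1 else 0)) / ((t : ℝ) + 1)

section Step

variable {t : ℕ} {α y : ℝ}

theorem beta_neg_iff : beta t α y < 0 ↔ t * y < (t + 1) * α - 1 / 2 := by
  have ht : (0 : ℝ) < t + 1 := by positivity
  have rescale : beta t α y
      = (|((t + 1) * α - t * y) - 1| - |(t + 1) * α - t * y|) / (t + 1) := by
    rw [sub_div, ← abs_of_pos ht, ← abs_div, ← abs_div, abs_of_pos ht, beta]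
    congr 2 <;> field_simp
  rw [rescale, div_lt_iff₀ ht, zero_mul, sub_neg, abs_sub_one_lt_abs_iff, lt_sub_comm]

theorem mem_kappa_iff :
    y ∈ kappa α t ↔ (t + 1) * α - 1 / 2 < (t + 1 / 2) * y ∧ (t + 1 / 2) * y < (t + 1) * α := by
  have ht : (0 : ℝ) < t + 1 / 2 := by positivity
  rw [kappa, Set.mem_Ioo, div_lt_iff₀' ht, lt_div_iff₀' ht]

theorem idealUpdate_of_beta_neg (hβ : beta t α y < 0) :
    idealUpdate t α y = (t * y + 1) / (t + 1) := by
  rw [idealUpdate, if_pos hβ]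

theorem idealUpdate_of_beta_nonneg (hβ : 0 ≤ beta t α y) :
    idealUpdate t α y = t * y / (t + 1) := by
  rw [idealUpdate, if_neg hβ.not_gt, add_zero]

theorem lt_one_of_beta_neg (hα : (t + 1) * α ≤ t + 1 / 2) (hβ : beta t α y < 0) : y < 1 := by
  rw [beta_neg_iff] at hβ
  exact lt_of_mul_lt_mul_left (by linarith : (t : ℝ) * y < t * 1) t.cast_nonneg

theorem pos_of_beta_nonneg (hα : 1 / 2 < (t + 1) * α) (hβ : 0 ≤ beta t α y) : 0 < y := by
  rw [← not_lt, beta_neg_iff, not_lt] at hβ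
  exact pos_of_mul_pos_right (by linarith : 0 < (t : ℝ) * y) t.cast_nonneg

theorem abs_sub_idealUpdate_le_iff_of_beta_neg (hα : (t + 1) * α ≤ t + 1 / 2)
    (hβ : beta t α y < 0) : |α - idealUpdate t α y| ≤ |α - y| ↔ y ∉ kappa α t := by
  have ht : (0 : ℝ) < t + 1 := by positivity
  have hy : y < 1 := lt_one_of_beta_neg hα hβ
  have moves_up : y < (t * y + 1) / (t + 1) := by
    rw [lt_div_iff₀ ht]
    linarith
  have below_upper : (t + 1 / 2) * y < (t + 1) * α := by
    linarith [beta_neg_iff.1 hβ]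
  rw [idealUpdate_of_beta_neg hβ, abs_sub_right_le_abs_sub_left_iff moves_up, mem_kappa_iff,
    and_iff_left below_upper, not_lt, ← le_sub_iff_add_le', div_le_iff₀ ht]
  constructor <;> intro h <;> linarith

theorem abs_sub_idealUpdate_le_iff_of_beta_nonneg (hα : 1 / 2 < (t + 1) * α)
    (hβ : 0 ≤ beta t α y) : |α - idealUpdate t α y| ≤ |α - y| ↔ y ∉ kappa α t := by
  have ht : (0 : ℝ) < t + 1 := by positivity
  have hy : 0 < y := pos_of_beta_nonneg hα hβ
  have moves_down : t * y / (t + 1) < y := by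
    rw [div_lt_iff₀ ht]
    linarith
  have above_lower : (t + 1) * α - 1 / 2 < (t + 1 / 2) * y := by
    linarith [not_lt.1 (beta_neg_iff.not.1 hβ.not_gt)]
  rw [idealUpdate_of_beta_nonneg hβ, abs_sub_left_le_abs_sub_right_iff moves_down, mem_kappa_iff,
    and_iff_right above_lower, not_lt, ← sub_le_iff_le_add, le_div_iff₀ ht]
  constructor <;> intro h <;> linarith

theorem abs_sub_idealUpdate_le_iff (hα₀ : 1 / 2 < (t + 1) * α) (hα₁ : (t + 1) * α ≤ t + 1 / 2) :
    |α - idealUpdate t α y| ≤ |α - y| ↔ y ∉ kappa α t :=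
  (lt_or_ge (beta t α y) 0).elim (abs_sub_idealUpdate_le_iff_of_beta_neg hα₁)
    (abs_sub_idealUpdate_le_iff_of_beta_nonneg hα₀)

end Step

theorem half_lt_succ_mul {t₀ t : ℕ} {α : ℝ} (hα : 1 / (2 * ((t₀ : ℝ) + 1)) < α) (ht : t₀ ≤ t) :
    1 / 2 < ((t : ℝ) + 1) * α := by
  have hα_t : 1 / (2 * ((t : ℝ) + 1)) < α := lt_of_le_of_lt (by gcongr) hα
  rw [div_lt_iff₀ (by positivity)] at hα_t
  linarith

theorem succ_mul_le_add_half {t₀ t : ℕ} {α : ℝ} (hα : α ≤ 1 - 1 / (2 * ((t₀ : ℝ) + 1)))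
    (ht : t₀ ≤ t) : ((t : ℝ) + 1) * α ≤ t + 1 / 2 := by
  have hα_t : 1 / (2 * ((t : ℝ) + 1)) ≤ 1 - α := le_trans (by gcongr) (le_sub_comm.1 hα)
  rw [div_le_iff₀ (by positivity)] at hα_t
  linarith

theorem stmt_6_general (t₀ : ℕ) (α : ℝ) (hα₀ : 1 / (2 * ((t₀ : ℝ) + 1)) < α)
    (hα₁ : α ≤ 1 - 1 / (2 * ((t₀ : ℝ) + 1))) (Y : ℕ → ℝ)
    (hdyn : ∀ t, t₀ ≤ t → Y (t + 1) = idealUpdate t α (Y t)) :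
    (∀ t, t₀ ≤ t → |α - Y (t + 1)| ≤ |α - Y t|) ↔ (∀ t, t₀ ≤ t → Y t ∉ kappa α t) := by
  refine forall₂_congr fun t ht ↦ ?_
  rw [hdyn t ht]
  exact abs_sub_idealUpdate_le_iff (half_lt_succ_mul hα₀ ht) (succ_mul_le_add_half hα₁ ht)

theorem stmt_6 (t0 : ℕ) (ht0 : 1 ≤ t0) (α : ℝ)
    (hα0 : 1 / (2 * ((t0 : ℝ) + 1)) < α) (hα1 : α < 1 / 2)
    (Y : ℕ → ℝ) (hY0 : 0 ≤ Y t0) (hY1 : Y t0 ≤ 1)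
    (hdyn : ∀ t, t0 ≤ t →
      Y (t + 1) = ((t : ℝ) * Y t + (if beta t α (Y t) < 0 then 1 else 0)) / ((t : ℝ) + 1)) :
    (∀ t, t0 ≤ t → |α - Y (t + 1)| ≤ |α - Y t|) ↔ (∀ t, t0 ≤ t → Y t ∉ kappa α t) :=
  stmt_6_general t0 α hα0 (by linarith) Y hdyn
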